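/- arXiv:2102.07714 — 2 statements merged into one kernel-verified Lean document; each statement's English description precedes it below -/
import Mathlib

section
/- Let λ ∈ [1/4, 2/5] and let μ_λ^{0,1,3} be the unique Borel probability measure on ℝ satisfying μ = (1/3)·(x ↦ λx)_*μ + (1/3)·(x ↦ λx + 1)_*μ + (1/3)·(x ↦ λx + 3)_*μ. Then dim_H(μ_λ^{0,1,3}) ≥ min{(log 3)/(log λ^{-1}), 1} − 0.2; that is, every Borel set X ⊆ ℝ with μ_λ^{0,1,3}(X) = 1 satisfies dim_H(X) ≥ min{(log 3)/(log λ^{-1}), 1} − 0.2. -/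
open MeasureTheory
open scoped ENNReal

/-!
For independent points `x`, `y` with law `μ`, the law `ν` of `x - y` is again self-similar: its maps
are `t ↦ l * t + (d i - d j)`. Hence `ν (B(t, r * l))` is the average over `i, j` of
`ν (B((t - (d i - d j)) / l, r))`. If a weight `w` is at least `1` near the support of `ν` and the
average over `i, j` of `w ((t - (d i - d j)) / l)` is at most `θ * w t` there, induction gives
`ν (B(0, r * l ^ n)) ≤ θ ^ n * w 0` for small `r`. The left-hand side is
`∫ μ (B(x, r * l ^ n)) dμ(x)`, so if `θ < l ^ α` then `μ (B(x, r * l ^ n)) = O(l ^ (α * n))` for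
almost every `x` by summability, and the mass distribution principle bounds the dimension of every
set of positive measure below by `α`.

With `s = min (log 3 / log l⁻¹) 1` we have `l ^ s = max (1 / 3) l ≥ l`, hence
`l ^ (s - 0.2) ≥ (l ^ s) ^ 0.8`, and a weight with `θ < max (1 / 3) l ^ 0.8` is enough.
Two explicit step functions, one for `l ≤ 4 / 11` and one for `l ≥ 4 / 11`, have this property;
bounding a dilated step function by its maximum over all cells that may be hit makes the check
finite and uniform in `l`.
-/

open Set Metric Filter Topology
open scoped NNReal

section MassDistribution

variable {E : Type*} [MetricSpace E] [MeasurableSpace E] {μ : Measure E} {α : ℝ≥0}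

theorem measure_le_mul_ediam_rpow {t : Set E} {a : E} (ha : a ∈ t) {C : ℝ≥0∞} {r₀ : ℝ}
    (hC : C ≠ ∞)
    (h : ∀ r ∈ Ioc 0 r₀, μ (closedBall a r) ≤ C * ENNReal.ofReal r ^ (α : ℝ))
    (ht : ediam t < ENNReal.ofReal r₀) : μ t ≤ C * ediam t ^ (α : ℝ) := by
  have hfin : ediam t ≠ ∞ := ht.ne_top
  have hdiam : diam t < r₀ := ENNReal.toReal_lt_of_lt_ofReal ht
  have hlim : Tendsto (fun r : ℝ ↦ C * ENNReal.ofReal r ^ (α : ℝ)) (𝓝[>] diam t)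
      (𝓝 (C * ENNReal.ofReal (diam t) ^ (α : ℝ))) :=
    ((ENNReal.continuous_const_mul hC).comp
      (ENNReal.continuous_rpow_const.comp ENNReal.continuous_ofReal)).continuousWithinAt
  rw [diam, ENNReal.ofReal_toReal hfin] at hlim
  refine ge_of_tendsto hlim ?_
  filter_upwards [Ioc_mem_nhdsGT hdiam] with r hr
  have hsub : t ⊆ closedBall a r := fun y hy ↦
    mem_closedBall.2 ((dist_le_diam_of_mem' hfin hy ha).trans hr.1.le)
  exact (measure_mono hsub).trans (h r ⟨diam_nonneg.trans_lt hr.1, hr.2⟩)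

theorem le_dimH_of_measure_closedBall_le [BorelSpace E] {A : Set E} {C : ℝ≥0∞} {r₀ : ℝ}
    (hC : C ≠ ∞) (hr₀ : 0 < r₀)
    (h : ∀ a ∈ A, ∀ r ∈ Ioc 0 r₀, μ (closedBall a r) ≤ C * ENNReal.ofReal r ^ (α : ℝ))
    (hA : μ A ≠ 0) : α ≤ dimH A := by
  obtain ⟨ε, hε, hεr₀⟩ := exists_between (ENNReal.ofReal_pos.2 hr₀)
  have hle : C⁻¹ • μ.restrict A ≤ μH[α] := by
    refine Measure.le_hausdorffMeasure _ _ ε hε fun s hs ↦ ?_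
    rw [Measure.smul_apply, smul_eq_mul, mul_comm, ← div_eq_mul_inv]
    refine ENNReal.div_le_of_le_mul' ?_
    calc μ.restrict A s ≤ μ.restrict A (closure s) := measure_mono subset_closure
      _ = μ (closure s ∩ A) := Measure.restrict_apply isClosed_closure.measurableSet
      _ ≤ C * ediam s ^ (α : ℝ) := by
        rcases (closure s ∩ A).eq_empty_or_nonempty with hempty | ⟨a, ha⟩
        · simp [hempty]
        have hdiam : ediam (closure s ∩ A) ≤ ediam s :=
          (ediam_mono inter_subset_left).trans_eq (ediam_closure s)
        calc μ (closure s ∩ A) ≤ C * ediam (closure s ∩ A) ^ (α : ℝ) :=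
              measure_le_mul_ediam_rpow ha hC (h a ha.2) ((hdiam.trans hs).trans_lt hεr₀)
          _ ≤ C * ediam s ^ (α : ℝ) := by gcongr
  refine le_dimH_of_hausdorffMeasure_ne_zero fun h0 ↦ ?_
  have hA0 : C⁻¹ * μ A = 0 := by simpa [h0] using hle A
  exact (mul_eq_zero.1 hA0).elim (ENNReal.inv_ne_zero.2 hC) hA

theorem measure_closedBall_le_mul_rpow_of_forall_pow {a : E} {C : ℝ≥0∞} {l r₀ : ℝ}
    (hl₀ : 0 < l) (hl₁ : l < 1) (hr₀ : 0 < r₀)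
    (h : ∀ n : ℕ, μ (closedBall a (r₀ * l ^ n)) ≤ C * (ENNReal.ofReal l ^ (α : ℝ)) ^ n)
    {r : ℝ} (hr : r ∈ Ioc 0 r₀) :
    μ (closedBall a r) ≤ C / ENNReal.ofReal (r₀ * l) ^ (α : ℝ) * ENNReal.ofReal r ^ (α : ℝ) := by
  obtain ⟨n, hn_lt, hn_le⟩ := exists_nat_pow_near_of_lt_one (div_pos hr.1 hr₀)
    ((div_le_one hr₀).2 hr.2) hl₀ hl₁
  have hr_le : r ≤ r₀ * l ^ n := (div_le_iff₀' hr₀).1 hn_le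
  have hpow_le : l ^ n ≤ r / (r₀ * l) := by
    rw [le_div_iff₀ (by positivity)]
    rw [lt_div_iff₀ hr₀, pow_succ] at hn_lt
    linarith
  calc μ (closedBall a r) ≤ μ (closedBall a (r₀ * l ^ n)) :=
        measure_mono (closedBall_subset_closedBall hr_le)
    _ ≤ C * (ENNReal.ofReal l ^ (α : ℝ)) ^ n := h n
    _ = C * ENNReal.ofReal (l ^ n) ^ (α : ℝ) := by
      rw [ENNReal.ofReal_pow hl₀.le, ← ENNReal.rpow_natCast_mul, ← ENNReal.rpow_mul_natCast,
        mul_comm (α : ℝ)]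
    _ ≤ C * ENNReal.ofReal (r / (r₀ * l)) ^ (α : ℝ) := by gcongr
    _ = C / ENNReal.ofReal (r₀ * l) ^ (α : ℝ) * ENNReal.ofReal r ^ (α : ℝ) := by
      rw [ENNReal.ofReal_div_of_pos (by positivity), ENNReal.div_rpow_of_nonneg _ _ α.coe_nonneg,
        ENNReal.mul_comm_div]

theorem ae_exists_forall_le_mul_pow {Ω : Type*} [MeasurableSpace Ω] {P : Measure Ω}
    {f : ℕ → Ω → ℝ≥0∞} (hf : ∀ n, AEMeasurable (f n) P) {K θ q : ℝ≥0∞} (hK : K ≠ ∞) (hθ : θ < q)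
    (hq : q ≠ ∞) (h : ∀ n, ∫⁻ ω, f n ω ∂P ≤ K * θ ^ n) :
    ∀ᵐ ω ∂P, ∃ C : ℕ, ∀ n, f n ω ≤ C * q ^ n := by
  have hq0 : q ≠ 0 := hθ.ne_bot
  have hratio : θ / q < 1 := ENNReal.div_lt_of_lt_mul (by rwa [one_mul])
  have hsum : ∫⁻ ω, ∑' n, f n ω / q ^ n ∂P ≠ ∞ := by
    rw [lintegral_tsum fun n ↦ (hf n).div_const _]
    refine ne_top_of_le_ne_top (b := K * (1 - θ / q)⁻¹) ?_ ?_
    · exact ENNReal.mul_ne_top hK (ENNReal.inv_ne_top.2 (tsub_pos_of_lt hratio).ne')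
    rw [← ENNReal.tsum_geometric, ← ENNReal.tsum_mul_left]
    refine ENNReal.tsum_le_tsum fun n ↦ ?_
    simp only [div_eq_mul_inv]
    rw [lintegral_mul_const'' _ (hf n), mul_pow, ← ENNReal.inv_pow, ← mul_assoc]
    gcongr
    exact h n
  have hmeas : AEMeasurable (fun ω ↦ ∑' n, f n ω / q ^ n) P := .tsum fun n ↦ (hf n).div_const _
  filter_upwards [ae_lt_top' hmeas hsum] with ω hω
  obtain ⟨C, hC⟩ := ENNReal.exists_nat_gt hω.ne
  refine ⟨C, fun n ↦ ?_⟩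
  rw [← ENNReal.div_le_iff (pow_ne_zero n hq0) (ENNReal.pow_ne_top hq)]
  exact (ENNReal.le_tsum n).trans hC.le

theorem measurable_measure_closedBall [OpensMeasurableSpace E] [SecondCountableTopology E]
    (μ : Measure E) [SFinite μ] (r : ℝ) : Measurable fun a ↦ μ (closedBall a r) :=
  measurable_measure_prodMk_left (ν := μ) (s := {z : E × E | dist z.2 z.1 ≤ r})
    (measurableSet_le (by fun_prop) measurable_const)

theorem le_dimH_of_lintegral_measure_closedBall_le [BorelSpace E] [SecondCountableTopology E]
    [SFinite μ] {l r₀ : ℝ} (hl₀ : 0 < l) (hl₁ : l < 1) (hr₀ : 0 < r₀) {K θ : ℝ≥0∞} (hK : K ≠ ∞)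
    (hθ : θ < ENNReal.ofReal l ^ (α : ℝ))
    (h : ∀ n : ℕ, ∫⁻ a, μ (closedBall a (r₀ * l ^ n)) ∂μ ≤ K * θ ^ n) {X : Set E}
    (hX : μ X ≠ 0) : α ≤ dimH X := by
  set q : ℝ≥0∞ := ENNReal.ofReal l ^ (α : ℝ)
  have hq_top : q ≠ ∞ := ENNReal.rpow_ne_top_of_nonneg α.2 ENNReal.ofReal_ne_top
  let A : ℕ → Set E := fun C ↦ {a | ∀ n : ℕ, μ (closedBall a (r₀ * l ^ n)) ≤ C * q ^ n}
  have hcover : (⋃ C, A C) ∈ ae μ := by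
    filter_upwards [ae_exists_forall_le_mul_pow
      (fun n ↦ (measurable_measure_closedBall μ _).aemeasurable) hK hθ hq_top h] with a ha
    exact mem_iUnion.2 ha
  obtain ⟨C, hC⟩ : ∃ C, μ (X ∩ A C) ≠ 0 := by
    by_contra! hnull
    refine hX ?_
    rw [← measure_inter_conull (mem_ae_iff.1 hcover), inter_iUnion]
    exact measure_iUnion_null hnull
  have hden : ENNReal.ofReal (r₀ * l) ^ (α : ℝ) ≠ 0 :=
    (ENNReal.rpow_pos (ENNReal.ofReal_pos.2 (by positivity)) ENNReal.ofReal_ne_top).ne'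
  calc (α : ℝ≥0∞) ≤ dimH (X ∩ A C) :=
        le_dimH_of_measure_closedBall_le (ENNReal.div_ne_top (ENNReal.natCast_ne_top C) hden) hr₀
          (fun a ha r hr ↦ measure_closedBall_le_mul_rpow_of_forall_pow hl₀ hl₁ hr₀ ha.2 hr) hC
    _ ≤ dimH X := dimH_mono inter_subset_left

end MassDistribution

section DifferenceLaw

variable {E : Type*} [NormedAddCommGroup E] [MeasurableSpace E] {μ : Measure E}

/-- The law of the difference of two independent points distributed according to `μ`: the measure
of its balls about `0` is the average `μ`-measure of the balls centred at `μ`-random points. -/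
noncomputable def differenceLaw (μ : Measure E) : Measure E :=
  (μ.prod μ).map fun z ↦ z.1 - z.2

instance [IsFiniteMeasure μ] : IsFiniteMeasure (differenceLaw μ) :=
  inferInstanceAs (IsFiniteMeasure (Measure.map _ _))

theorem lintegral_measure_closedBall_eq_differenceLaw [BorelSpace E] [SecondCountableTopology E]
    [SFinite μ] (r : ℝ) :
    ∫⁻ a, μ (closedBall a r) ∂μ = differenceLaw μ (closedBall 0 r) := by
  have hsub : Measurable fun z : E × E ↦ z.1 - z.2 := by fun_prop
  rw [differenceLaw, Measure.map_apply hsub measurableSet_closedBall,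
    Measure.prod_apply (hsub measurableSet_closedBall)]
  congr! with a
  ext b
  rw [mem_preimage, mem_preimage, mem_closedBall, mem_closedBall_zero_iff, dist_eq_norm_sub']

end DifferenceLaw

section SelfSimilarMeasure

theorem preimage_smul_add_closedBall {E : Type*} [NormedAddCommGroup E] [NormedSpace ℝ E] {l : ℝ}
    (hl : 0 < l) (b x : E) (r : ℝ) :
    (fun y ↦ l • y + b) ⁻¹' closedBall x (r * l) = closedBall (l⁻¹ • (x - b)) r := by
  ext y
  have hscale : l • y + b - x = l • (y - l⁻¹ • (x - b)) := by
    rw [smul_sub, smul_inv_smul₀ hl.ne']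
    abel
  rw [mem_preimage, mem_closedBall_iff_norm, mem_closedBall_iff_norm, hscale, norm_smul,
    Real.norm_of_nonneg hl.le, mul_comm, mul_le_mul_iff_left₀ hl]

variable {E : Type*} [NormedAddCommGroup E] [NormedSpace ℝ E] [MeasurableSpace E] {ι : Type*}
  [Fintype ι] {l : ℝ} {d : ι → E} {p : ι → ℝ≥0∞} {μ : Measure E}

/-- Stationarity of `μ` for the iterated function scheme of the maps `x ↦ l • x + d i`, taken with
the weights `p i`. -/
def IsSelfSimilarMeasure (l : ℝ) (d : ι → E) (p : ι → ℝ≥0∞) (μ : Measure E) : Prop :=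
  μ = ∑ i, p i • μ.map fun x ↦ l • x + d i

variable [BorelSpace E]

namespace IsSelfSimilarMeasure

theorem measure_eq_sum (hμ : IsSelfSimilarMeasure l d p μ) {S : Set E} (hS : MeasurableSet S) :
    μ S = ∑ i, p i * μ ((fun x ↦ l • x + d i) ⁻¹' S) := by
  conv_lhs => rw [hμ, Measure.finsetSum_apply]
  refine Finset.sum_congr rfl fun i _ ↦ ?_
  rw [Measure.smul_apply, smul_eq_mul, Measure.map_apply (by fun_prop) hS]

theorem measure_closedBall_eq_sum (hμ : IsSelfSimilarMeasure l d p μ) (hl : 0 < l) (x : E) (r : ℝ) :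
    μ (closedBall x (r * l)) = ∑ i, p i * μ (closedBall (l⁻¹ • (x - d i)) r) := by
  rw [hμ.measure_eq_sum measurableSet_closedBall]
  simp only [preimage_smul_add_closedBall hl]

theorem measure_lt_norm_le (hμ : IsSelfSimilarMeasure l d p μ) (hl : 0 ≤ l) (hp : ∑ i, p i ≤ 1)
    {c : ℝ} (hd : ∀ i, ‖d i‖ ≤ c) {R R' : ℝ} (hR : l * R' + c ≤ R) :
    μ {x | R < ‖x‖} ≤ μ {x | R' < ‖x‖} := by
  have hsub (i : ι) : (fun x ↦ l • x + d i) ⁻¹' {x | R < ‖x‖} ⊆ {x | R' < ‖x‖} := by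
    intro x hx
    have hnorm : R < l * ‖x‖ + c :=
      calc R < ‖l • x + d i‖ := hx
        _ ≤ ‖l • x‖ + ‖d i‖ := norm_add_le _ _
        _ ≤ l * ‖x‖ + c := by
          rw [norm_smul, Real.norm_of_nonneg hl]
          gcongr
          exact hd i
    exact lt_of_mul_lt_mul_left (by linarith) hl
  calc μ {x | R < ‖x‖} = ∑ i, p i * μ ((fun x ↦ l • x + d i) ⁻¹' {x | R < ‖x‖}) :=
        hμ.measure_eq_sum (measurableSet_lt measurable_const measurable_norm)
    _ ≤ ∑ i, p i * μ {x | R' < ‖x‖} := by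
        gcongr with i
        exact hsub i
    _ = (∑ i, p i) * μ {x | R' < ‖x‖} := (Finset.sum_mul ..).symm
    _ ≤ μ {x | R' < ‖x‖} := mul_le_of_le_one_left' hp

theorem measure_lt_norm_eq_zero [CompleteSpace E] [SecondCountableTopology E] [IsFiniteMeasure μ]
    (hμ : IsSelfSimilarMeasure l d p μ) (hl₀ : 0 < l) (hl₁ : l < 1) (hp : ∑ i, p i ≤ 1) {c : ℝ}
    (hd : ∀ i, ‖d i‖ ≤ c) {R : ℝ} (hR : c / (1 - l) < R) : μ {x | R < ‖x‖} = 0 := by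
  set D := c / (1 - l)
  have hD : l * D + c = D := by
    have : 1 - l ≠ 0 := (sub_pos.2 hl₁).ne'
    simp only [D]
    field_simp
    ring
  have hiter (n : ℕ) : μ {x | R < ‖x‖} ≤ μ {x | D + (R - D) * l⁻¹ ^ n < ‖x‖} := by
    induction n with
    | zero => simp
    | succ n ih =>
      refine ih.trans (hμ.measure_lt_norm_le hl₀.le hp hd (le_of_eq ?_))
      rw [pow_succ, mul_add, add_right_comm, hD]
      field_simp
  have htail : Tendsto (fun R : ℝ ↦ μ {x | R < ‖x‖}) atTop (𝓝 0) := by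
    simpa using tendsto_measure_norm_gt_of_isTightMeasureSet (isTightMeasureSet_singleton (μ := μ))
  have hradius : Tendsto (fun n ↦ D + (R - D) * l⁻¹ ^ n) atTop atTop :=
    tendsto_atTop_add_const_left _ _
      ((tendsto_pow_atTop_atTop_of_one_lt (one_lt_inv₀ hl₀ |>.2 hl₁)).const_mul_atTop
        (sub_pos.2 hR))
  exact le_antisymm (ge_of_tendsto' (htail.comp hradius) hiter) zero_le

theorem measure_closedBall_le_of_supersolution (hμ : IsSelfSimilarMeasure l d p μ) (hl₀ : 0 < l)
    (hl₁ : l ≤ 1) {r₀ : ℝ} (hr₀ : 0 ≤ r₀) {B : Set E} (hB : ∀ x ∉ B, μ (closedBall x r₀) = 0)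
    {w : E → ℝ≥0∞} {θ : ℝ≥0∞} (hw : ∀ x ∈ B, 1 ≤ w x)
    (hθ : ∀ x ∈ B, ∑ i, p i * w (l⁻¹ • (x - d i)) ≤ θ * w x) (n : ℕ) (x : E) :
    μ (closedBall x (r₀ * l ^ n)) ≤ μ univ * θ ^ n * w x := by
  induction n generalizing x with
  | zero =>
    by_cases hx : x ∈ B
    · calc μ (closedBall x (r₀ * l ^ 0)) ≤ μ univ * θ ^ 0 * 1 := by
            simpa using measure_mono (subset_univ _)
        _ ≤ μ univ * θ ^ 0 * w x := by
            gcongr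
            exact hw x hx
    · simp [hB x hx]
  | succ n ih =>
    by_cases hx : x ∈ B
    · calc μ (closedBall x (r₀ * l ^ (n + 1)))
          = ∑ i, p i * μ (closedBall (l⁻¹ • (x - d i)) (r₀ * l ^ n)) := by
            rw [pow_succ, ← mul_assoc, hμ.measure_closedBall_eq_sum hl₀]
        _ ≤ ∑ i, p i * (μ univ * θ ^ n * w (l⁻¹ • (x - d i))) := by
            gcongr with i
            exact ih _
        _ = μ univ * θ ^ n * ∑ i, p i * w (l⁻¹ • (x - d i)) := by
            simp only [Finset.mul_sum, mul_left_comm]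
        _ ≤ μ univ * θ ^ n * (θ * w x) := by
            gcongr
            exact hθ x hx
        _ = μ univ * θ ^ (n + 1) * w x := by ring
    · have hball : closedBall x (r₀ * l ^ (n + 1)) ⊆ closedBall x r₀ :=
        closedBall_subset_closedBall (mul_le_of_le_one_right hr₀ (pow_le_one₀ hl₀.le hl₁))
      simp [measure_mono_null hball (hB x hx)]

variable [SecondCountableTopology E]

protected theorem differenceLaw [SFinite μ] (hμ : IsSelfSimilarMeasure l d p μ) :
    IsSelfSimilarMeasure l (fun ij : ι × ι ↦ d ij.1 - d ij.2) (fun ij ↦ p ij.1 * p ij.2)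
      (differenceLaw μ) := by
  have hprod : μ.prod μ = ∑ ij : ι × ι, (p ij.1 * p ij.2) •
      (μ.prod μ).map (Prod.map (fun x ↦ l • x + d ij.1) (fun x ↦ l • x + d ij.2)) := by
    conv_lhs => rw [hμ, ← Measure.sum_fintype, Measure.prod_sum, Measure.sum_fintype]
    refine Finset.sum_congr rfl fun ij _ ↦ ?_
    rw [Measure.prod_smul_left, Measure.prod_smul_right, smul_smul,
      Measure.map_prod_map _ _ (by fun_prop) (by fun_prop)]
  have hsub : Measurable fun z : E × E ↦ z.1 - z.2 := by fun_prop
  unfold IsSelfSimilarMeasure _root_.differenceLaw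
  conv_lhs => rw [hprod, Measure.map_finset_sum hsub.aemeasurable]
  refine Finset.sum_congr rfl fun ij _ ↦ ?_
  rw [Measure.map_smul, Measure.map_map hsub (by fun_prop), Measure.map_map (by fun_prop) hsub]
  congr 2
  ext z
  change l • z.1 + d ij.1 - (l • z.2 + d ij.2) = l • (z.1 - z.2) + (d ij.1 - d ij.2)
  rw [smul_sub, add_sub_add_comm]

end IsSelfSimilarMeasure

variable [SecondCountableTopology E]

theorem IsSelfSimilarMeasure.le_dimH_of_supersolution [CompleteSpace E] [IsFiniteMeasure μ]
    (hμ : IsSelfSimilarMeasure l d p μ) (hl₀ : 0 < l) (hl₁ : l < 1) (hp : ∑ i, p i ≤ 1) {c R : ℝ}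
    (hd : ∀ i j, ‖d i - d j‖ ≤ c) (hR : c / (1 - l) < R) {w : E → ℝ≥0∞} {θ : ℝ≥0∞}
    (hw₀ : w 0 ≠ ∞) (hw : ∀ x, ‖x‖ < R → 1 ≤ w x)
    (hθ : ∀ x, ‖x‖ < R →
      ∑ ij : ι × ι, p ij.1 * p ij.2 * w (l⁻¹ • (x - (d ij.1 - d ij.2))) ≤ θ * w x)
    {α : ℝ≥0} (hα : θ < ENNReal.ofReal l ^ (α : ℝ)) {X : Set E} (hX : μ X ≠ 0) :
    α ≤ dimH X := by
  have hν := hμ.differenceLaw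
  have hp₂ : ∑ ij : ι × ι, p ij.1 * p ij.2 ≤ 1 := by
    rw [Fintype.sum_prod_type, ← Finset.sum_mul_sum]
    exact mul_le_one' hp hp
  obtain ⟨R', hR', hR'R⟩ := exists_between hR
  have hr₀ : 0 < (R - R') / 2 := half_pos (sub_pos.2 hR'R)
  have hsupp (x : E) (hx : x ∉ ball 0 R) :
      differenceLaw μ (closedBall x ((R - R') / 2)) = 0 := by
    refine measure_mono_null (fun y hy ↦ ?_)
      (hν.measure_lt_norm_eq_zero hl₀ hl₁ hp₂ (fun ij ↦ hd ij.1 ij.2) hR')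
    have := norm_sub_norm_le x y
    rw [mem_closedBall_iff_norm'] at hy
    rw [mem_ball_zero_iff, not_lt] at hx
    exact show R' < ‖y‖ by linarith
  have hbound := hν.measure_closedBall_le_of_supersolution hl₀ hl₁.le hr₀.le hsupp
    (fun x hx ↦ hw x (mem_ball_zero_iff.1 hx)) fun x hx ↦ hθ x (mem_ball_zero_iff.1 hx)
  refine le_dimH_of_lintegral_measure_closedBall_le (K := differenceLaw μ univ * w 0) hl₀
    hl₁ hr₀ (ENNReal.mul_ne_top (measure_ne_top _ _) hw₀) hα (fun n ↦ ?_) hX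
  rw [lintegral_measure_closedBall_eq_differenceLaw, mul_right_comm]
  exact hbound n 0

end SelfSimilarMeasure

section Certificate

/-- The value on the cell `[k, k + 1)` of the even step function that is `L[0], L[1], …` on the
cells `[0, 1), [1, 2), …` and vanishes beyond the list; `Int.negSucc n = -n - 1` is the mirror image
of the cell `n`. -/
def evenStep (L : List ℕ) : ℤ → ℕ
  | .ofNat n => L.getD n 0
  | .negSucc n => L.getD n 0

/-- The indices of the cells met by the dilates of `[k, k + 1)` by factors in `[a / q, b / q]`. -/
noncomputable def dilatedCells (a b q : ℕ) (k : ℤ) : Finset ℤ :=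
  Finset.Icc (min (a * k) (b * k) / q) ((max (a * (k + 1)) (b * (k + 1)) - 1) / q)

theorem mul_mem_uIcc {a b c : ℝ} (hc : c ∈ Icc a b) (t : ℝ) : c * t ∈ uIcc (a * t) (b * t) := by
  rw [mem_uIcc]
  rcases le_total 0 t with ht | ht
  · exact .inl ⟨mul_le_mul_of_nonneg_right hc.1 ht, mul_le_mul_of_nonneg_right hc.2 ht⟩
  · exact .inr ⟨mul_le_mul_of_nonpos_right hc.2 ht, mul_le_mul_of_nonpos_right hc.1 ht⟩

theorem floor_mul_mem_dilatedCells {a b q : ℕ} (hq : 0 < q) {κ : ℝ} (hκ₀ : 0 < κ)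
    (hκ : q * κ ∈ Icc (a : ℝ) b) (t : ℝ) : ⌊κ * t⌋ ∈ dilatedCells a b q ⌊t⌋ := by
  have : (0 : ℝ) < q := Nat.cast_pos.2 hq
  rw [dilatedCells, Finset.mem_Icc, ← Int.lt_add_one_iff,
    Int.ediv_lt_iff_lt_mul (Int.natCast_pos.2 hq), Int.le_ediv_iff_mul_le (Int.natCast_pos.2 hq),
    Int.le_sub_one_iff, ← Int.cast_lt (R := ℝ), ← Int.cast_lt (R := ℝ)]
  push_cast
  constructor
  · calc min (a * ⌊t⌋ : ℝ) (b * ⌊t⌋) ≤ q * κ * ⌊t⌋ := (mul_mem_uIcc hκ _).1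
      _ ≤ q * κ * t := by gcongr; exact Int.floor_le t
      _ = κ * t * q := by ring
      _ < (⌊κ * t⌋ + 1) * q := by gcongr; exact Int.lt_floor_add_one _
  · calc (⌊κ * t⌋ * q : ℝ) ≤ κ * t * q := by gcongr; exact Int.floor_le _
      _ = q * κ * t := by ring
      _ < q * κ * (⌊t⌋ + 1) := by gcongr; exact Int.lt_floor_add_one t
      _ ≤ max (a * (⌊t⌋ + 1) : ℝ) (b * (⌊t⌋ + 1)) := (mul_mem_uIcc hκ _).2

theorem floor_mem_Ico_of_abs_lt {n : ℕ} {t : ℝ} (ht : |t| < n) : ⌊t⌋ ∈ Finset.Ico (-n : ℤ) n := by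
  rw [abs_lt] at ht
  rw [Finset.mem_Ico, Int.le_floor, Int.floor_lt]
  exact ⟨by exact_mod_cast ht.1.le, by exact_mod_cast ht.2⟩

variable {ι : Type*} [Fintype ι] {d : ι → ℤ} {N a b q A B : ℕ} {L : List ℕ}

/-- An integer certificate for the step function `x ↦ evenStep L ⌊N * x⌋` to be at least `1` on
`(-L.length / N, L.length / N)`, and there to satisfy the supersolution inequality with factor
`A / B` for the differences of the digits `d` taken with equal weights, uniformly over the inverse
contraction ratios in `[a / q, b / q]`. -/
abbrev IsCertificate (d : ι → ℤ) (N a b q : ℕ) (L : List ℕ) (A B : ℕ) : Prop :=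
  ∀ k ∈ Finset.Ico (-L.length : ℤ) L.length, 1 ≤ evenStep L k ∧
    B * ∑ ij : ι × ι, (dilatedCells a b q (k - N * (d ij.1 - d ij.2))).sup (evenStep L) ≤
      A * Fintype.card ι ^ 2 * evenStep L k

theorem IsCertificate.mul_sum_le (h : IsCertificate d N a b q L A B) (hq : 0 < q)
    {κ : ℝ} (hκ₀ : 0 < κ) (hκ : q * κ ∈ Icc (a : ℝ) b) {x : ℝ} (hx : |N * x| < L.length) :
    B * ∑ ij : ι × ι, evenStep L ⌊N * (κ * (x - (d ij.1 - d ij.2)))⌋ ≤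
      A * Fintype.card ι ^ 2 * evenStep L ⌊N * x⌋ := by
  refine le_trans ?_ (h _ (floor_mem_Ico_of_abs_lt hx)).2
  gcongr with ij
  have hshift : ⌊N * x⌋ - N * (d ij.1 - d ij.2) = ⌊N * (x - (d ij.1 - d ij.2))⌋ := by
    rw [← Int.floor_sub_intCast]
    push_cast
    ring_nf
  rw [hshift, mul_left_comm]
  exact Finset.le_sup (f := evenStep L) (floor_mul_mem_dilatedCells hq hκ₀ hκ _)

theorem IsCertificate.sum_inv_card_mul_le (h : IsCertificate d N a b q L A B) (hq : 0 < q)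
    (hB : B ≠ 0) {κ : ℝ} (hκ₀ : 0 < κ) (hκ : q * κ ∈ Icc (a : ℝ) b) {x : ℝ}
    (hx : |N * x| < L.length) :
    ∑ ij : ι × ι, (Fintype.card ι : ℝ≥0∞)⁻¹ * (Fintype.card ι : ℝ≥0∞)⁻¹ *
        evenStep L ⌊N * (κ * (x - (d ij.1 - d ij.2)))⌋ ≤ A / B * evenStep L ⌊N * x⌋ := by
  rw [← Finset.mul_sum, ← ENNReal.mul_inv (by simp) (by simp), mul_comm, ← div_eq_mul_inv]
  refine ENNReal.div_le_of_le_mul ?_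
  rw [mul_assoc, ENNReal.mul_comm_div, ← mul_div_assoc,
    ENNReal.le_div_iff_mul_le (by simp [hB]) (by simp), mul_comm, ← pow_two, ← mul_assoc,
    mul_right_comm]
  exact_mod_cast h.mul_sum_le hq hκ₀ hκ hx

theorem IsCertificate.le_dimH {l : ℝ} (h : IsCertificate d N a b q L A B) (hN : 0 < N)
    (hq : 0 < q) (hB : B ≠ 0) (hl₀ : 0 < l) (hl₁ : l < 1) (ha : a * l ≤ q) (hb : q ≤ b * l) {c : ℤ}
    (hd : ∀ i j, d i - d j ≤ c) (hL : c * N < L.length * (1 - l)) {μ : Measure ℝ}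
    [IsFiniteMeasure μ]
    (hμ : IsSelfSimilarMeasure l (fun i ↦ (d i : ℝ)) (fun _ ↦ (Fintype.card ι : ℝ≥0∞)⁻¹) μ)
    {α : ℝ} (hα : (A / B : ℝ) < l ^ α) {X : Set ℝ} (hX : μ X ≠ 0) :
    ENNReal.ofReal α ≤ dimH X := by
  rcases le_total α 0 with hα₀ | hα₀
  · simp [ENNReal.ofReal_of_nonpos hα₀]
  lift α to ℝ≥0 using hα₀
  rw [ENNReal.ofReal_coe_nnreal]
  have hN' : (0 : ℝ) < N := Nat.cast_pos.2 hN
  have hκ : q * l⁻¹ ∈ Icc (a : ℝ) b := by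
    rw [← div_eq_mul_inv]
    exact ⟨(le_div_iff₀ hl₀).2 ha, (div_le_iff₀ hl₀).2 hb⟩
  have habs (x : ℝ) (hx : ‖x‖ < L.length / N) : |N * x| < L.length := by
    rwa [abs_mul, Nat.abs_cast, ← lt_div_iff₀' hN']
  have hθ : (A / B : ℝ≥0∞) < ENNReal.ofReal l ^ (α : ℝ) := by
    rw [ENNReal.ofReal_rpow_of_pos hl₀]
    refine lt_of_eq_of_lt ?_ (ENNReal.ofReal_lt_ofReal_iff_of_nonneg (by positivity) |>.2 hα)
    rw [ENNReal.ofReal_div_of_pos (by positivity), ENNReal.ofReal_natCast, ENNReal.ofReal_natCast]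
  refine hμ.le_dimH_of_supersolution (w := fun x ↦ (evenStep L ⌊N * x⌋ : ℕ)) hl₀ hl₁
    (by simp [ENNReal.mul_inv_le_one]) (fun i j ↦ ?_)
    ((div_lt_div_iff₀ (sub_pos.2 hl₁) hN').2 hL) (by simp)
    (fun x hx ↦ ?_) (fun x hx ↦ ?_) hθ hX
  · rw [Real.norm_eq_abs, abs_sub_le_iff]
    exact ⟨by exact_mod_cast hd i j, by exact_mod_cast hd j i⟩
  · exact_mod_cast (h _ (floor_mem_Ico_of_abs_lt (habs x hx))).1
  · exact h.sum_inv_card_mul_le hq hB (inv_pos.2 hl₀) hκ (habs x hx)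

end Certificate

section Exponent

theorem rpow_log_div_log_inv {l b : ℝ} (hl₀ : 0 < l) (hl₁ : l < 1) (hb : 0 < b) :
    l ^ (Real.log b / Real.log l⁻¹) = b⁻¹ := by
  rw [Real.log_inv, div_neg, Real.rpow_neg hl₀.le, Real.log_div_log,
    Real.rpow_logb hl₀ hl₁.ne hb]

theorem rpow_min_eq_max {l : ℝ} (hl₀ : 0 < l) (hl₁ : l ≤ 1) (s t : ℝ) :
    l ^ min s t = max (l ^ s) (l ^ t) :=
  (Real.antitone_rpow_of_base_le_one hl₀ hl₁).map_min

theorem lt_rpow_min_log_div_log_inv_sub {l b θ δ : ℝ} {n : ℕ} (hl₀ : 0 < l) (hl₁ : l < 1)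
    (hb : 0 < b) (hδ : δ * (n + 1) = 1) (hθ : θ ^ (n + 1) < max b⁻¹ l ^ n) :
    θ < l ^ (min (Real.log b / Real.log l⁻¹) 1 - δ) := by
  have hroot : (l ^ δ) ^ (n + 1) = l := by
    rw [← Real.rpow_mul_natCast hl₀.le, Nat.cast_add_one, hδ, Real.rpow_one]
  rw [Real.rpow_sub hl₀, rpow_min_eq_max hl₀ hl₁.le, rpow_log_div_log_inv hl₀ hl₁ hb,
    Real.rpow_one, lt_div_iff₀ (by positivity)]
  refine lt_of_pow_lt_pow_left₀ (n + 1) (by positivity) ?_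
  calc (θ * l ^ δ) ^ (n + 1) = θ ^ (n + 1) * l := by rw [mul_pow, hroot]
    _ < max b⁻¹ l ^ n * l := by gcongr
    _ ≤ max b⁻¹ l ^ n * max b⁻¹ l := by gcongr; exact le_max_right _ _
    _ = max b⁻¹ l ^ (n + 1) := (pow_succ _ _).symm

end Exponent

section ZeroOneThree

/-- The weight for the ratios `l ∈ [1 / 4, 4 / 11]`, on cells of length `1 / 7`. It was found by
iterating the maximum-over-cells operator and rounding up to integers, with the factor
`83 / 200 < 3 ^ (-4 / 5)`. -/
def weightOneFourthFourElevenths : List ℕ :=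
  [30, 25, 23, 21, 20, 21, 20, 20, 18, 15, 13, 13, 14, 14, 14, 13, 11, 11, 10, 11, 11, 11, 9, 8, 6,
    5, 5, 3, 3, 3, 2, 1, 1, 1]

/-- The weight for the ratios `l ∈ [4 / 11, 2 / 5]`, on cells of length `1 / 7`, found in the same
way with the factor `4 / 9 < (4 / 11) ^ (4 / 5)`. -/
def weightFourEleventhsTwoFifths : List ℕ :=
  [23, 21, 19, 19, 17, 17, 16, 16, 16, 14, 13, 12, 12, 12, 12, 10, 10, 9, 9, 9, 9, 9, 7, 6, 5, 4, 4,
    3, 3, 3, 2, 1, 1, 1, 1, 1]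

theorem isCertificate_weightOneFourthFourElevenths :
    IsCertificate ![0, 1, 3] 7 11 16 4 weightOneFourthFourElevenths 83 200 := by
  decide +kernel

theorem isCertificate_weightFourEleventhsTwoFifths :
    IsCertificate ![0, 1, 3] 7 10 11 4 weightFourEleventhsTwoFifths 4 9 := by
  decide +kernel

theorem dim013_lower_bound_general (l : ℝ) (hl0 : 1 / 4 ≤ l) (hl1 : l ≤ 2 / 5)
    (μ : Measure ℝ) [IsFiniteMeasure μ]
    (hμ : μ = (1 / 3 : ℝ≥0∞) • Measure.map (fun x : ℝ => l * x) μ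
            + (1 / 3 : ℝ≥0∞) • Measure.map (fun x : ℝ => l * x + 1) μ
            + (1 / 3 : ℝ≥0∞) • Measure.map (fun x : ℝ => l * x + 3) μ)
    (X : Set ℝ) (hX : μ X ≠ 0) :
    ENNReal.ofReal (min (Real.log 3 / Real.log l⁻¹) 1 - 0.2) ≤ dimH X := by
  have hl₀ : 0 < l := by linarith
  have hl₁ : l < 1 := by linarith
  have hdigits : ∀ i j : Fin 3, (![0, 1, 3] : Fin 3 → ℤ) i - ![0, 1, 3] j ≤ 3 := by decide
  have hself : IsSelfSimilarMeasure l (fun i ↦ ((![0, 1, 3] : Fin 3 → ℤ) i : ℝ))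
      (fun _ ↦ (Fintype.card (Fin 3) : ℝ≥0∞)⁻¹) μ := by
    simpa [IsSelfSimilarMeasure, Fin.sum_univ_three] using hμ
  have hexp {θ : ℝ} (hθ : θ ^ 5 < max 3⁻¹ l ^ 4) :
      θ < l ^ (min (Real.log 3 / Real.log l⁻¹) 1 - 0.2) :=
    lt_rpow_min_log_div_log_inv_sub hl₀ hl₁ zero_lt_three (by norm_num) hθ
  rcases le_total l (4 / 11) with hl | hl
  · refine isCertificate_weightOneFourthFourElevenths.le_dimH (by simp) (by simp) (by simp) hl₀ hl₁
      ?_ ?_ hdigits ?_ hself (hexp ?_) hX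
    · norm_num; linarith
    · norm_num; linarith
    · norm_num [weightOneFourthFourElevenths]; linarith
    · calc ((83 : ℕ) / (200 : ℕ) : ℝ) ^ 5 < 3⁻¹ ^ 4 := by norm_num
        _ ≤ max 3⁻¹ l ^ 4 := by gcongr; exact le_max_left _ _
  · refine isCertificate_weightFourEleventhsTwoFifths.le_dimH (by simp) (by simp) (by simp) hl₀ hl₁
      ?_ ?_ hdigits ?_ hself (hexp ?_) hX
    · norm_num; linarith
    · norm_num; linarith
    · norm_num [weightFourEleventhsTwoFifths]; linarith
    · calc ((4 : ℕ) / (9 : ℕ) : ℝ) ^ 5 < (4 / 11) ^ 4 := by norm_num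
        _ ≤ max 3⁻¹ l ^ 4 := by gcongr; exact le_max_of_le_right hl

end ZeroOneThree

/-- For `λ ∈ [1/4, 2/5]`, the stationary measure `μ_λ^{0,1,3}` of the `{0,1,3}`-system
satisfies `dim_H(μ) ≥ min{log 3 / log λ⁻¹, 1} − 0.2`: every Borel set of full measure
has Hausdorff dimension at least this bound. -/
theorem dim013_lower_bound (l : ℝ) (hl0 : 1 / 4 ≤ l) (hl1 : l ≤ 2 / 5)
    (μ : Measure ℝ) [IsProbabilityMeasure μ]
    (hμ : μ = (1 / 3 : ℝ≥0∞) • Measure.map (fun x : ℝ => l * x) μ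
            + (1 / 3 : ℝ≥0∞) • Measure.map (fun x : ℝ => l * x + 1) μ
            + (1 / 3 : ℝ≥0∞) • Measure.map (fun x : ℝ => l * x + 3) μ)
    (X : Set ℝ) (hX : MeasurableSet X) (hX1 : μ X = 1) :
    ENNReal.ofReal (min (Real.log 3 / Real.log l⁻¹) 1 - 0.2) ≤ dimH X :=
  dim013_lower_bound_general l hl0 hl1 μ hμ X (by simp [hX1])
end

section
/- Let S(λ, c̄, p̄) be an iterated function scheme of similarities f_j(x) = λx + c_j with probability vector p̄ (p_j > 0), and let μ be its stationary measure. If 0 < α < 1 and the energy ∬ |x − y|^{-α} dμ(x) dμ(y) is finite, then there exist a compact interval K with f_j(K) ⊆ K for all j, a compact interval J whose interior contains {x − y : x, y ∈ K}, a constant θ > 0, and a piecewise constant function ψ : ℝ → ℝ (a finite linear combination of indicator functions of intervals) vanishing outside J with θ ≤ ψ(x) ≤ θ^{-1} for all x ∈ J, such that for every x ∈ J one has λ^{-α} ∑_{i,j} p_i p_j ψ((x − c_i + c_j)/λ) < ψ(x). -/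
open MeasureTheory
open scoped ENNReal

/-!
Let `ν` be the law of `x - y` under `μ × μ`. It is stationary for the scheme of maps
`z ↦ λ z + (c i - c j)` with weights `p i * p j`, and `D^{(2)}` is the diffusion operator `D` of
that scheme. Stationarity says exactly that `D` sends the density
`x ↦ r ^ (-α) * ν (closedBall x r)` to the same density at scale `λ r`. The autocorrelation `ν` puts
almost as much mass around `0` as around any other point, and finite energy forces the density at
`0` to vanish as `r → 0`; so the densities tend to `0` uniformly. The indicator `χ` of `J` is
dominated by a multiple of one of them, hence `D ^ N χ < 1` for some `N`. Then
`ψ = ∑ n < N, D ^ n χ` satisfies `D ψ - ψ = D ^ N χ - χ < 0` on `J`.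
-/

open Filter Metric Set
open scoped Topology

section DifferenceMeasure

variable {E : Type*} [MeasurableSpace E]

/-- The law of `x - y` for independent `x`, `y` of law `μ`, i.e. the autocorrelation of `μ`. -/
noncomputable def differenceMeasure [Sub E] (μ : Measure E) : Measure E :=
  (μ.prod μ).map fun q => q.1 - q.2

theorem lintegral_differenceMeasure [Sub E] [MeasurableSub₂ E] (μ : Measure E) [SFinite μ]
    {f : E → ℝ≥0∞} (hf : Measurable f) :
    ∫⁻ z, f z ∂differenceMeasure μ = ∫⁻ x, ∫⁻ y, f (x - y) ∂μ ∂μ := by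
  rw [differenceMeasure, lintegral_map hf measurable_sub]
  exact lintegral_prod _ (hf.comp measurable_sub).aemeasurable

instance [Sub E] [MeasurableSub₂ E] (μ : Measure E) [IsProbabilityMeasure μ] :
    IsProbabilityMeasure (differenceMeasure μ) :=
  Measure.isProbabilityMeasure_map measurable_sub.aemeasurable

theorem lintegral_mul_sub_right_le_lintegral_mul_self [AddGroup E] [MeasurableAdd E]
    (ρ : Measure E) [ρ.IsAddRightInvariant] {g : E → ℝ≥0∞} (hg : Measurable g) (x : E) :
    ∫⁻ t, g t * g (t - x) ∂ρ ≤ ∫⁻ t, g t * g t ∂ρ := by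
  have hgx : Measurable fun t => g (t - x) := by
    simpa only [sub_eq_add_neg] using! hg.comp (measurable_add_const (-x))
  calc ∫⁻ t, g t * g (t - x) ∂ρ
      ≤ (∫⁻ t, g t ^ (2 : ℝ) ∂ρ) ^ (1 / 2 : ℝ) * (∫⁻ t, g (t - x) ^ (2 : ℝ) ∂ρ) ^ (1 / 2 : ℝ) :=
        ENNReal.lintegral_mul_le_Lp_mul_Lq ρ .two_two hg.aemeasurable hgx.aemeasurable
    _ = ∫⁻ t, g t ^ (2 : ℝ) ∂ρ := by
        rw [lintegral_sub_right_eq_self (fun t => g t ^ (2 : ℝ)) x,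
          ← ENNReal.rpow_add_of_nonneg _ _ (by norm_num) (by norm_num)]
        norm_num
    _ = ∫⁻ t, g t * g t ∂ρ := by simp only [ENNReal.rpow_two, sq]

variable [NormedAddCommGroup E] [BorelSpace E] [SecondCountableTopology E]
  (μ ρ : Measure E) (x : E) (r : ℝ)

theorem measurableSet_setOf_dist_add_le : MeasurableSet {q : E × E | dist q.1 (q.2 + x) ≤ r} :=
  measurableSet_le (by fun_prop) measurable_const

theorem differenceMeasure_closedBall :
    differenceMeasure μ (closedBall x r) = (μ.prod μ) {q | dist q.1 (q.2 + x) ≤ r} := by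
  rw [differenceMeasure, Measure.map_apply measurable_sub measurableSet_closedBall]
  congr with q
  simp only [mem_preimage, mem_closedBall, mem_ofPred_eq, dist_eq_norm, sub_sub]

theorem lintegral_measure_closedBall_mul_measure_closedBall_sub [SFinite μ] [SFinite ρ] :
    ∫⁻ t, μ (closedBall t r) * μ (closedBall (t - x) r) ∂ρ =
      ∫⁻ q, ρ (closedBall q.1 r ∩ closedBall (q.2 + x) r) ∂μ.prod μ := by
  set S : Set ((E × E) × E) := {s | dist s.2 s.1.1 ≤ r} ∩ {s | dist s.2 (s.1.2 + x) ≤ r}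
  have hS : MeasurableSet S :=
    .inter (measurableSet_le (by fun_prop) measurable_const)
      (measurableSet_le (by fun_prop) measurable_const)
  have hsection (t : E) :
      (fun q => (q, t)) ⁻¹' S = closedBall t r ×ˢ closedBall (t - x) r := by
    ext q
    simp only [S, preimage_inter, preimage_ofPred_eq, mem_inter_iff, mem_ofPred_eq, mem_prod,
      mem_closedBall', dist_eq_norm, sub_sub, add_comm x]
  calc ∫⁻ t, μ (closedBall t r) * μ (closedBall (t - x) r) ∂ρ
      = ∫⁻ t, (μ.prod μ) ((fun q => (q, t)) ⁻¹' S) ∂ρ := by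
        simp only [hsection, Measure.prod_prod]
    _ = ((μ.prod μ).prod ρ) S := (Measure.prod_apply_symm hS).symm
    _ = ∫⁻ q, ρ (closedBall q.1 r ∩ closedBall (q.2 + x) r) ∂μ.prod μ := Measure.prod_apply hS

theorem haar_closedBall_mul_differenceMeasure_closedBall_le_lintegral [ρ.IsAddHaarMeasure] :
    ρ (closedBall 0 r) * differenceMeasure μ (closedBall x r) ≤
      ∫⁻ q, ρ (closedBall q.1 (2 * r) ∩ closedBall (q.2 + x) (2 * r)) ∂μ.prod μ := by
  rw [differenceMeasure_closedBall,
    ← lintegral_indicator_const (measurableSet_setOf_dist_add_le x r)]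
  refine lintegral_mono <| indicator_le fun q hq => ?_
  rw [← Measure.addHaar_closedBall_center ρ q.1 r]
  have hdist : dist q.1 (q.2 + x) ≤ r := hq
  have hr : 0 ≤ r := dist_nonneg.trans hdist
  gcongr
  exact subset_inter (closedBall_subset_closedBall (by linarith))
    (closedBall_subset_closedBall' (by linarith))

theorem lintegral_haar_closedBall_inter_closedBall_le [ρ.IsAddHaarMeasure] :
    ∫⁻ q, ρ (closedBall q.1 r ∩ closedBall (q.2 + x) r) ∂μ.prod μ ≤
      ρ (closedBall 0 r) * differenceMeasure μ (closedBall x (2 * r)) := by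
  rw [differenceMeasure_closedBall,
    ← lintegral_indicator_const (measurableSet_setOf_dist_add_le x (2 * r))]
  refine lintegral_mono fun q => ?_
  by_cases hq : dist q.1 (q.2 + x) ≤ 2 * r
  · rw [indicator_of_mem (by exact hq), ← Measure.addHaar_closedBall_center ρ q.1]
    gcongr
    exact inter_subset_left
  · have hdisj : Disjoint (closedBall q.1 r) (closedBall (q.2 + x) r) :=
      closedBall_disjoint_closedBall (by linarith)
    rw [hdisj.inter_eq, measure_empty]
    exact zero_le

/-- By Fubini the autocorrelation at `x` of `t ↦ μ (closedBall t (2 * r))` is comparable to the mass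
of `differenceMeasure μ` near `x`, and by Cauchy–Schwarz it is largest at `x = 0`. -/
theorem haar_closedBall_mul_differenceMeasure_closedBall_le [SFinite μ] [SFinite ρ]
    [ρ.IsAddHaarMeasure] :
    ρ (closedBall 0 r) * differenceMeasure μ (closedBall x r) ≤
      ρ (closedBall 0 (2 * r)) * differenceMeasure μ (closedBall 0 (4 * r)) := by
  have hmeas : Measurable fun t => μ (closedBall t (2 * r)) := by
    have hclose : MeasurableSet {q : E × E | dist q.2 q.1 ≤ 2 * r} :=
      measurableSet_le (by fun_prop) measurable_const
    exact measurable_measure_prodMk_left hclose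
  calc ρ (closedBall 0 r) * differenceMeasure μ (closedBall x r)
      ≤ ∫⁻ t, μ (closedBall t (2 * r)) * μ (closedBall (t - x) (2 * r)) ∂ρ := by
        rw [lintegral_measure_closedBall_mul_measure_closedBall_sub]
        exact haar_closedBall_mul_differenceMeasure_closedBall_le_lintegral μ ρ x r
    _ ≤ ∫⁻ t, μ (closedBall t (2 * r)) * μ (closedBall (t - 0) (2 * r)) ∂ρ := by
        simpa only [sub_zero] using lintegral_mul_sub_right_le_lintegral_mul_self ρ hmeas x
    _ ≤ ρ (closedBall 0 (2 * r)) * differenceMeasure μ (closedBall 0 (2 * (2 * r))) := by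
        rw [lintegral_measure_closedBall_mul_measure_closedBall_sub]
        exact lintegral_haar_closedBall_inter_closedBall_le μ ρ 0 (2 * r)
    _ = ρ (closedBall 0 (2 * r)) * differenceMeasure μ (closedBall 0 (4 * r)) := by
        rw [← mul_assoc]
        norm_num

end DifferenceMeasure

section BallDensity

section PseudoMetricSpace

variable {X : Type*} [PseudoMetricSpace X] [MeasurableSpace X]

/-- The average `α`-dimensional density of `ν` at scale `r`, as a function of the centre. -/
noncomputable def ballDensity (ν : Measure X) (α r : ℝ) (x : X) : ℝ :=
  r ^ (-α) * ν.real (closedBall x r)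

theorem ballDensity_nonneg (ν : Measure X) (α : ℝ) {r : ℝ} (hr : 0 ≤ r) (x : X) :
    0 ≤ ballDensity ν α r x := by
  unfold ballDensity
  positivity

theorem exists_indicator_closedBall_le_smul_ballDensity (ν : Measure X) [IsFiniteMeasure ν]
    [NeZero ν] (α : ℝ) (x₀ : X) (R : ℝ) :
    ∃ r > 0, ∃ A > (0 : ℝ), (closedBall x₀ R).indicator 1 ≤ A • ballDensity ν α r := by
  obtain ⟨n, hn⟩ : ∃ n : ℕ, 0 < ν (closedBall x₀ n) :=
    exists_measure_pos_of_not_measure_iUnion_null <| by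
      rw [iUnion_closedBall_nat]
      exact NeZero.ne (ν univ)
  set m := ν.real (closedBall x₀ n)
  have hm : 0 < m := ENNReal.toReal_pos hn.ne' (measure_ne_top ν _)
  set r := |R| + n + 1
  have hr : 0 < r := by positivity
  refine ⟨r, hr, (r ^ (-α) * m)⁻¹, by positivity, indicator_le' (fun x hx => ?_) fun x _ => ?_⟩
  · have hsub : closedBall x₀ n ⊆ closedBall x r := by
      refine closedBall_subset_closedBall' ?_
      rw [dist_comm]
      linarith [mem_closedBall.mp hx, le_abs_self R]
    calc (1 : ℝ) = (r ^ (-α) * m)⁻¹ * (r ^ (-α) * m) := (inv_mul_cancel₀ (by positivity)).symm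
      _ ≤ (r ^ (-α) * m)⁻¹ * (r ^ (-α) * ν.real (closedBall x r)) := by
        gcongr
        exact measureReal_mono hsub
  · exact mul_nonneg (by positivity) (ballDensity_nonneg ν α hr.le x)

end PseudoMetricSpace

variable {E : Type*} [NormedAddCommGroup E] [MeasurableSpace E] {α : ℝ}

theorem ofReal_rpow_neg_mul_measure_closedBall_le [OpensMeasurableSpace E] (ν : Measure E)
    (hα : 0 ≤ α) (r : ℝ) :
    ENNReal.ofReal r ^ (-α) * ν (closedBall 0 r) ≤ ∫⁻ z in closedBall 0 r, ‖z‖ₑ ^ (-α) ∂ν := by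
  rw [← setLIntegral_const]
  refine setLIntegral_mono (by fun_prop) fun z hz => ?_
  rw [ENNReal.rpow_neg, ENNReal.rpow_neg, ENNReal.inv_le_inv, ← ofReal_norm]
  gcongr
  exact mem_closedBall_zero_iff.mp hz

theorem ballDensity_zero_le_toReal_setLIntegral [OpensMeasurableSpace E] {ν : Measure E}
    (hα : 0 ≤ α) (henergy : ∫⁻ z, ‖z‖ₑ ^ (-α) ∂ν ≠ ∞) {r : ℝ} (hr : 0 < r) :
    ballDensity ν α r 0 ≤ (∫⁻ z in closedBall 0 r, ‖z‖ₑ ^ (-α) ∂ν).toReal := by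
  have hfin : ∫⁻ z in closedBall 0 r, ‖z‖ₑ ^ (-α) ∂ν ≠ ∞ :=
    ne_top_of_le_ne_top henergy (setLIntegral_le_lintegral _ _)
  calc ballDensity ν α r 0 = (ENNReal.ofReal r ^ (-α) * ν (closedBall 0 r)).toReal := by
        rw [ballDensity, ENNReal.toReal_mul, ENNReal.ofReal_rpow_of_pos hr,
          ENNReal.toReal_ofReal (by positivity), measureReal_def]
    _ ≤ _ := ENNReal.toReal_mono hfin (ofReal_rpow_neg_mul_measure_closedBall_le ν hα r)

theorem measure_singleton_zero_of_lintegral_enorm_rpow_ne_top [OpensMeasurableSpace E]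
    {ν : Measure E} (hα : 0 < α) (henergy : ∫⁻ z, ‖z‖ₑ ^ (-α) ∂ν ≠ ∞) : ν {0} = 0 := by
  refine measure_mono_null ?_ (measure_eq_top_of_lintegral_ne_top (by fun_prop) henergy)
  simp [hα]

variable [BorelSpace E]

theorem tendsto_ballDensity_zero {ν : Measure E} [IsFiniteMeasure ν] (hα : 0 < α)
    (henergy : ∫⁻ z, ‖z‖ₑ ^ (-α) ∂ν ≠ ∞) :
    Tendsto (fun r => ballDensity ν α r 0) (𝓝[>] 0) (𝓝 0) := by
  have hmeasure : Tendsto (fun r => ν (cthickening r {(0 : E)})) (𝓝[>] 0) (𝓝 0) := by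
    rw [← measure_singleton_zero_of_lintegral_enorm_rpow_ne_top hα henergy]
    exact (tendsto_measure_cthickening_of_isClosed ⟨1, one_pos, measure_ne_top ν _⟩
      isClosed_singleton).mono_left nhdsWithin_le_nhds
  have hintegral := (ENNReal.tendsto_toReal ENNReal.zero_ne_top).comp
    (tendsto_setLIntegral_zero henergy hmeasure)
  refine squeeze_zero' ?_ ?_ hintegral
  · filter_upwards [self_mem_nhdsWithin] with r (hr : 0 < r)
    exact ballDensity_nonneg ν α hr.le 0
  · filter_upwards [self_mem_nhdsWithin] with r (hr : 0 < r)
    simpa only [Function.comp_apply, cthickening_singleton (0 : E) hr.le] using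
      ballDensity_zero_le_toReal_setLIntegral hα.le henergy hr

theorem differenceMeasure_closedBall_le_two_pow_mul [NormedSpace ℝ E] [FiniteDimensional ℝ E]
    (μ : Measure E) [SFinite μ] (x : E) {r : ℝ} (hr : 0 < r) :
    differenceMeasure μ (closedBall x r) ≤
      2 ^ Module.finrank ℝ E * differenceMeasure μ (closedBall 0 (4 * r)) := by
  set ρ : Measure E := Measure.addHaar
  have hρ₀ : ρ (closedBall 0 r) ≠ 0 := (measure_closedBall_pos ρ 0 hr).ne'
  have hρ : ρ (closedBall 0 r) ≠ ∞ := measure_closedBall_lt_top.ne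
  have hdouble : ρ (closedBall 0 (2 * r)) = 2 ^ Module.finrank ℝ E * ρ (closedBall 0 r) := by
    rw [Measure.addHaar_closedBall_mul_of_pos ρ 0 two_pos, ENNReal.ofReal_pow two_pos.le,
      ENNReal.ofReal_ofNat]
  refine (ENNReal.mul_le_mul_iff_right hρ₀ hρ).mp ?_
  calc ρ (closedBall 0 r) * differenceMeasure μ (closedBall x r)
      ≤ ρ (closedBall 0 (2 * r)) * differenceMeasure μ (closedBall 0 (4 * r)) :=
        haar_closedBall_mul_differenceMeasure_closedBall_le μ ρ x r
    _ = ρ (closedBall 0 r) *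
          (2 ^ Module.finrank ℝ E * differenceMeasure μ (closedBall 0 (4 * r))) := by
        rw [hdouble]
        ring

theorem ballDensity_differenceMeasure_le [NormedSpace ℝ E] [FiniteDimensional ℝ E]
    (μ : Measure E) [IsProbabilityMeasure μ] (α : ℝ) (x : E) {r : ℝ} (hr : 0 < r) :
    ballDensity (differenceMeasure μ) α r x ≤
      2 ^ Module.finrank ℝ E * 4 ^ α * ballDensity (differenceMeasure μ) α (4 * r) 0 := by
  have hmass : (differenceMeasure μ).real (closedBall x r) ≤
      2 ^ Module.finrank ℝ E * (differenceMeasure μ).real (closedBall 0 (4 * r)) := by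
    simpa [measureReal_def] using ENNReal.toReal_mono (by finiteness)
      (differenceMeasure_closedBall_le_two_pow_mul μ x hr)
  calc ballDensity (differenceMeasure μ) α r x
      ≤ r ^ (-α) *
          (2 ^ Module.finrank ℝ E * (differenceMeasure μ).real (closedBall 0 (4 * r))) :=
        mul_le_mul_of_nonneg_left hmass (by positivity)
    _ = 2 ^ Module.finrank ℝ E * 4 ^ α * ballDensity (differenceMeasure μ) α (4 * r) 0 := by
        have hfour : (4 : ℝ) ^ α * 4 ^ (-α) = 1 := by
          rw [← Real.rpow_add (by norm_num), add_neg_cancel, Real.rpow_zero]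
        rw [ballDensity, Real.mul_rpow (by norm_num) hr.le]
        linear_combination (-(2 : ℝ) ^ Module.finrank ℝ E * r ^ (-α) *
          (differenceMeasure μ).real (closedBall 0 (4 * r))) * hfour

theorem tendstoUniformly_ballDensity_differenceMeasure [NormedSpace ℝ E] [FiniteDimensional ℝ E]
    {μ : Measure E} [IsProbabilityMeasure μ] (hα : 0 < α)
    (henergy : ∫⁻ x, ∫⁻ y, ‖x - y‖ₑ ^ (-α) ∂μ ∂μ ≠ ∞) :
    TendstoUniformly (ballDensity (differenceMeasure μ) α) 0 (𝓝[>] 0) := by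
  rw [← lintegral_differenceMeasure μ (f := fun z => ‖z‖ₑ ^ (-α)) (by fun_prop)] at henergy
  have hscale : Tendsto (fun r : ℝ => 4 * r) (𝓝[>] 0) (𝓝[>] 0) := by
    refine tendsto_nhdsWithin_iff.mpr ⟨?_, ?_⟩
    · exact (Continuous.tendsto' (by fun_prop) 0 0 (mul_zero 4)).mono_left nhdsWithin_le_nhds
    · filter_upwards [self_mem_nhdsWithin] with r (hr : 0 < r)
      exact mul_pos (by norm_num) hr
  have hcenter := ((tendsto_ballDensity_zero hα henergy).comp hscale).const_mul
    (2 ^ Module.finrank ℝ E * 4 ^ α)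
  rw [mul_zero] at hcenter
  rw [Metric.tendstoUniformly_iff]
  intro ε hε
  filter_upwards [self_mem_nhdsWithin, hcenter.eventually_lt_const hε] with r (hr : 0 < r) hlt x
  rw [Pi.zero_apply, dist_zero_left, Real.norm_of_nonneg (ballDensity_nonneg _ α hr.le x)]
  exact (ballDensity_differenceMeasure_le μ α x hr).trans_lt hlt

end BallDensity

section Scheme

variable {ι E : Type*} [Fintype ι] {l α : ℝ} {d : ι → E} {w : ι → ℝ}

section DiffusionOperator

variable [AddCommGroup E] [Module ℝ E]

/-- The diffusion operator `D_{α,S}` of the scheme `S` of similarities `z ↦ l • z + d i` with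
weights `w i`. The paper's `D^{(2)}_{α,S}` is the operator of the scheme of differences, indexed by
pairs `(i, j)`, with translations `c i - c j` and weights `p i * p j`. -/
noncomputable def diffusionOperator (l α : ℝ) (d : ι → E) (w : ι → ℝ) : Module.End ℝ (E → ℝ) where
  toFun ψ x := l ^ (-α) * ∑ i, w i * ψ (l⁻¹ • (x - d i))
  map_add' ψ φ := by
    ext x
    simp only [Pi.add_apply, mul_add, Finset.sum_add_distrib]
  map_smul' a ψ := by
    ext x
    simp only [Pi.smul_apply, smul_eq_mul, RingHom.id_apply, Finset.mul_sum]
    exact Finset.sum_congr rfl fun i _ => by ring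

theorem diffusionOperator_apply (ψ : E → ℝ) (x : E) :
    diffusionOperator l α d w ψ x = l ^ (-α) * ∑ i, w i * ψ (l⁻¹ • (x - d i)) :=
  rfl

theorem monotone_diffusionOperator (hl : 0 ≤ l) (hw : ∀ i, 0 ≤ w i) :
    Monotone (diffusionOperator l α d w) := fun ψ φ hψφ x => by
  simp only [diffusionOperator_apply]
  gcongr with i
  · exact hw i
  · exact hψφ _

theorem pi_compl_bot_mem_invtSubmodule_diffusionOperator (hl : l ≠ 0) {J : Set E}
    (hJ : ∀ i, MapsTo (fun z => l • z + d i) J J) :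
    Submodule.pi Jᶜ (fun _ => (⊥ : Submodule ℝ ℝ)) ∈
      (diffusionOperator l α d w).invtSubmodule := by
  intro ψ hψ x hx
  have hpreimage (i : ι) : l⁻¹ • (x - d i) ∈ Jᶜ := fun hmem => hx <| by
    simpa [smul_inv_smul₀ hl] using hJ i hmem
  refine (Submodule.mem_bot ℝ).mpr ?_
  rw [diffusionOperator_apply, Finset.sum_eq_zero, mul_zero]
  intro i _
  rw [(Submodule.mem_bot ℝ).mp (hψ _ (hpreimage i)), mul_zero]

end DiffusionOperator

/-- `ν` is a stationary measure of the scheme of maps `z ↦ l • z + d i` with weights `w i`. -/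
def IsStationaryMeasure [AddCommGroup E] [Module ℝ E] [MeasurableSpace E] (l : ℝ) (d : ι → E)
    (w : ι → ℝ) (ν : Measure E) : Prop :=
  ν = ∑ i, ENNReal.ofReal (w i) • ν.map fun z => l • z + d i

variable [NormedAddCommGroup E] [NormedSpace ℝ E] [MeasurableSpace E] [BorelSpace E]
  {ν : Measure E}

theorem IsStationaryMeasure.lintegral_eq (hν : IsStationaryMeasure l d w ν) {f : E → ℝ≥0∞}
    (hf : Measurable f) :
    ∫⁻ z, f z ∂ν = ∑ i, ENNReal.ofReal (w i) * ∫⁻ z, f (l • z + d i) ∂ν := by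
  conv_lhs => rw [hν]
  rw [lintegral_finsetSum_measure]
  refine Finset.sum_congr rfl fun i _ => ?_
  rw [lintegral_smul_measure, lintegral_map hf (by fun_prop), smul_eq_mul]

theorem isStationaryMeasure_differenceMeasure [SecondCountableTopology E] [SFinite ν]
    (hw : ∀ i, 0 ≤ w i) (hν : IsStationaryMeasure l d w ν) :
    IsStationaryMeasure l (fun q : ι × ι => d q.1 - d q.2) (fun q => w q.1 * w q.2)
      (differenceMeasure ν) := by
  refine Measure.ext_of_lintegral _ fun f hf => ?_
  have hinner (i : ι) : ∫⁻ x, ∫⁻ y, f (l • x + d i - y) ∂ν ∂ν =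
      ∑ j, ENNReal.ofReal (w j) * ∫⁻ z, f (l • z + (d i - d j)) ∂differenceMeasure ν := by
    calc ∫⁻ x, ∫⁻ y, f (l • x + d i - y) ∂ν ∂ν
        = ∫⁻ x, ∑ j, ENNReal.ofReal (w j) * ∫⁻ y, f (l • (x - y) + (d i - d j)) ∂ν ∂ν := by
          refine lintegral_congr fun x => ?_
          rw [hν.lintegral_eq (f := fun y => f (l • x + d i - y)) (by fun_prop)]
          simp only [smul_sub, add_sub_add_comm]
      _ = ∑ j, ENNReal.ofReal (w j) * ∫⁻ z, f (l • z + (d i - d j)) ∂differenceMeasure ν := by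
          rw [lintegral_finsetSum _ fun j _ => by fun_prop]
          refine Finset.sum_congr rfl fun j _ => ?_
          rw [lintegral_const_mul _ (by fun_prop), lintegral_differenceMeasure ν (by fun_prop)]
  rw [lintegral_differenceMeasure ν hf, hν.lintegral_eq (by fun_prop),
    lintegral_finsetSum_measure, Fintype.sum_prod_type]
  refine Finset.sum_congr rfl fun i _ => ?_
  rw [hinner, Finset.mul_sum]
  refine Finset.sum_congr rfl fun j _ => ?_
  rw [lintegral_smul_measure, lintegral_map hf (by fun_prop), smul_eq_mul,
    ENNReal.ofReal_mul (hw i), mul_assoc]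

theorem IsStationaryMeasure.measureReal_closedBall [IsFiniteMeasure ν] (hl : 0 < l)
    (hw : ∀ i, 0 ≤ w i) (hν : IsStationaryMeasure l d w ν) (x : E) (r : ℝ) :
    ν.real (closedBall x (l * r)) = ∑ i, w i * ν.real (closedBall (l⁻¹ • (x - d i)) r) := by
  have hpreimage (i : ι) : (fun z => l • z + d i) ⁻¹' closedBall x (l * r) =
      closedBall (l⁻¹ • (x - d i)) r := by
    ext z
    have hsub : l • z + d i - x = l • (z - l⁻¹ • (x - d i)) := by
      rw [smul_sub, smul_inv_smul₀ hl.ne']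
      abel
    rw [mem_preimage, mem_closedBall, mem_closedBall, dist_eq_norm, dist_eq_norm, hsub, norm_smul,
      Real.norm_of_nonneg hl.le, mul_le_mul_iff_right₀ hl]
  have hball : ν (closedBall x (l * r)) =
      ∑ i, ENNReal.ofReal (w i) * ν (closedBall (l⁻¹ • (x - d i)) r) := by
    conv_lhs => rw [hν]
    simp only [Measure.coe_finsetSum, Finset.sum_apply, Measure.smul_apply, smul_eq_mul]
    refine Finset.sum_congr rfl fun i _ => ?_
    rw [Measure.map_apply (by fun_prop) measurableSet_closedBall, hpreimage]
  rw [measureReal_def, hball, ENNReal.toReal_sum fun i _ => by finiteness]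
  simp only [ENNReal.toReal_mul, ENNReal.toReal_ofReal (hw _), measureReal_def]

theorem IsStationaryMeasure.diffusionOperator_ballDensity [IsFiniteMeasure ν] (hl : 0 < l)
    (hw : ∀ i, 0 ≤ w i) (hν : IsStationaryMeasure l d w ν) {r : ℝ} (hr : 0 ≤ r) :
    diffusionOperator l α d w (ballDensity ν α r) = ballDensity ν α (l * r) := by
  ext x
  simp only [diffusionOperator_apply, ballDensity, hν.measureReal_closedBall hl hw,
    Real.mul_rpow hl.le hr, Finset.mul_sum]
  exact Finset.sum_congr rfl fun i _ => by ring

theorem IsStationaryMeasure.diffusionOperator_pow_ballDensity [IsFiniteMeasure ν] (hl : 0 < l)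
    (hw : ∀ i, 0 ≤ w i) (hν : IsStationaryMeasure l d w ν) {r : ℝ} (hr : 0 ≤ r) (n : ℕ) :
    (diffusionOperator l α d w ^ n) (ballDensity ν α r) = ballDensity ν α (l ^ n * r) := by
  induction n with
  | zero => simp
  | succ n ih =>
    rw [pow_succ', Module.End.mul_apply, ih,
      hν.diffusionOperator_ballDensity hl hw (by positivity), pow_succ', mul_assoc]

theorem IsStationaryMeasure.exists_diffusionOperator_pow_indicator_lt_one [IsFiniteMeasure ν]
    [NeZero ν] (hl₀ : 0 < l) (hl₁ : l < 1) (hw : ∀ i, 0 ≤ w i) (hν : IsStationaryMeasure l d w ν)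
    (hdensity : TendstoUniformly (ballDensity ν α) 0 (𝓝[>] 0)) (R : ℝ) :
    ∃ N, ∀ x, (diffusionOperator l α d w ^ N) ((closedBall 0 R).indicator 1) x < 1 := by
  obtain ⟨r, hr, A, hA, hle⟩ := exists_indicator_closedBall_le_smul_ballDensity ν α 0 R
  have hscale : Tendsto (fun n : ℕ => l ^ n * r) atTop (𝓝[>] 0) := by
    refine tendsto_nhdsWithin_iff.mpr ⟨?_, .of_forall fun n => by
      rw [mem_Ioi]
      positivity⟩
    simpa using (tendsto_pow_atTop_nhds_zero_of_lt_one hl₀.le hl₁).mul_const r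
  obtain ⟨N, hN⟩ := (hscale.eventually
    (Metric.tendstoUniformly_iff.mp hdensity A⁻¹ (inv_pos.mpr hA))).exists
  have hmono : Monotone (diffusionOperator l α d w ^ N) := by
    rw [Module.End.coe_pow]
    exact (monotone_diffusionOperator hl₀.le hw).iterate N
  refine ⟨N, fun x => ?_⟩
  calc (diffusionOperator l α d w ^ N) ((closedBall 0 R).indicator 1) x
      ≤ (diffusionOperator l α d w ^ N) (A • ballDensity ν α r) x := hmono hle x
    _ = A * ballDensity ν α (l ^ N * r) x := by
        rw [map_smul, hν.diffusionOperator_pow_ballDensity hl₀ hw hr.le, Pi.smul_apply, smul_eq_mul]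
    _ < A * A⁻¹ := by
        gcongr
        have habs := hN x
        rw [Pi.zero_apply, dist_zero_left] at habs
        exact (le_abs_self _).trans_lt habs
    _ = 1 := mul_inv_cancel₀ hA.ne'

end Scheme

section GeometricSum

theorem geom_sum_apply_mem_of_mem_invtSubmodule {R M : Type*} [Semiring R] [AddCommMonoid M]
    [Module R M] {T : Module.End R M} {V : Submodule R M} (hV : V ∈ T.invtSubmodule) {v : M}
    (hv : v ∈ V) (N : ℕ) : (∑ n ∈ Finset.range N, T ^ n) v ∈ V := by
  rw [LinearMap.sum_apply]
  refine Submodule.sum_mem _ fun n _ => ?_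
  rw [Module.End.coe_pow]
  exact MapsTo.iterate (f := T) (s := V) hV n hv

variable {X : Type*} {T : Module.End ℝ (X → ℝ)} {J : Set X} {N : ℕ} {x : X}

theorem one_le_geom_sum_apply_indicator (hT : Monotone T) (hN : N ≠ 0) (hx : x ∈ J) :
    1 ≤ (∑ n ∈ Finset.range N, T ^ n) (J.indicator 1) x := by
  have hnonneg (n : ℕ) : 0 ≤ (T ^ n) (J.indicator 1) := by
    have hmono : Monotone (T ^ n) := by
      rw [Module.End.coe_pow]
      exact hT.iterate n
    have hle := hmono (show 0 ≤ J.indicator 1 from indicator_nonneg fun _ _ => zero_le_one)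
    rwa [map_zero] at hle
  rw [LinearMap.sum_apply, Finset.sum_apply]
  simpa [hx] using Finset.single_le_sum (f := fun n => (T ^ n) (J.indicator 1) x)
    (fun n _ => hnonneg n x) (Finset.mem_range.mpr (Nat.pos_of_ne_zero hN))

theorem map_geom_sum_apply_indicator_lt (hx : x ∈ J) (hN : (T ^ N) (J.indicator 1) x < 1) :
    T ((∑ n ∈ Finset.range N, T ^ n) (J.indicator 1)) x <
      (∑ n ∈ Finset.range N, T ^ n) (J.indicator 1) x := by
  have htelescope :=
    congrFun (LinearMap.congr_fun (mul_geom_sum T N) (J.indicator 1)) x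
  simp only [Module.End.mul_apply, LinearMap.sub_apply, Module.End.one_apply, Pi.sub_apply,
    indicator_of_mem hx, Pi.one_apply] at htelescope
  linarith

end GeometricSum

section PiecewiseConstant

/-- The piecewise constant functions: finite linear combinations of indicators of intervals, where
an interval is any order-connected set. -/
def piecewiseConstant (X : Type*) [Preorder X] : Submodule ℝ (X → ℝ) :=
  .span ℝ ((fun I => I.indicator 1) '' {I : Set X | I.OrdConnected})

variable {X : Type*} [Preorder X] {ψ : X → ℝ}

theorem comp_mem_piecewiseConstant {Y : Type*} [Preorder Y] {f : Y → X} (hf : Monotone f)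
    (hψ : ψ ∈ piecewiseConstant X) : ψ ∘ f ∈ piecewiseConstant Y := by
  have hle : piecewiseConstant X ≤
      (piecewiseConstant Y).comap (LinearMap.funLeft ℝ ℝ f) := by
    refine Submodule.span_le.mpr ?_
    rintro _ ⟨I, hI, rfl⟩
    exact Submodule.subset_span ⟨f ⁻¹' I, OrdConnected.preimage_mono hI hf, rfl⟩
  exact hle hψ

theorem exists_eq_sum_indicator_of_mem_piecewiseConstant (hψ : ψ ∈ piecewiseConstant X) :
    ∃ (m : ℕ) (coef : Fin m → ℝ) (I : Fin m → Set X), (∀ i, (I i).OrdConnected) ∧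
      ψ = fun x => ∑ i, (I i).indicator (fun _ => coef i) x := by
  obtain ⟨m, coef, g, rfl⟩ := Submodule.mem_span_set'.mp hψ
  choose I hI hg using fun i => (g i).2
  refine ⟨m, coef, I, hI, ?_⟩
  ext x
  simp only [Finset.sum_apply, Pi.smul_apply, ← hg, ← indicator_const_smul_apply]
  simp

theorem exists_forall_le_of_mem_piecewiseConstant (hψ : ψ ∈ piecewiseConstant X) :
    ∃ C, ∀ x, ψ x ≤ C := by
  obtain ⟨m, coef, I, -, rfl⟩ := exists_eq_sum_indicator_of_mem_piecewiseConstant hψ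
  refine ⟨∑ i, |coef i|, fun x => Finset.sum_le_sum fun i _ => ?_⟩
  exact indicator_apply_le' (fun _ => le_abs_self _) fun _ => abs_nonneg _

end PiecewiseConstant

section InvariantBalls

variable {E : Type*} [SeminormedAddCommGroup E]

theorem exists_nonneg_forall_norm_le_one_sub_mul {ι : Type*} [Finite ι] {l : ℝ} (hl : l < 1)
    (c : ι → E) : ∃ A, 0 ≤ A ∧ ∀ i, ‖c i‖ ≤ (1 - l) * A := by
  have := Fintype.ofFinite ι
  have hl' : 0 < 1 - l := sub_pos.mpr hl
  refine ⟨(∑ i, ‖c i‖) / (1 - l), by positivity, fun i => ?_⟩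
  rw [mul_div_cancel₀ _ hl'.ne']
  exact Finset.single_le_sum (f := fun i => ‖c i‖) (fun i _ => norm_nonneg (c i))
    (Finset.mem_univ i)

theorem mapsTo_smul_add_closedBall [NormedSpace ℝ E] {l R : ℝ} (hl : 0 ≤ l) {c : E}
    (hc : ‖c‖ ≤ (1 - l) * R) : MapsTo (fun z => l • z + c) (closedBall 0 R) (closedBall 0 R) := by
  intro z hz
  rw [mem_closedBall_zero_iff] at hz ⊢
  calc ‖l • z + c‖ ≤ ‖l • z‖ + ‖c‖ := norm_add_le _ _
    _ = l * ‖z‖ + ‖c‖ := by rw [norm_smul, Real.norm_of_nonneg hl]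
    _ ≤ l * R + (1 - l) * R := by gcongr
    _ = R := by ring

end InvariantBalls

section RealLine

variable {l α : ℝ}

theorem piecewiseConstant_mem_invtSubmodule_diffusionOperator {ι : Type*} [Fintype ι]
    (hl : 0 ≤ l) (d w : ι → ℝ) :
    piecewiseConstant ℝ ∈ (diffusionOperator l α d w).invtSubmodule := by
  intro ψ hψ
  have hmono (i : ι) : Monotone fun x : ℝ => l⁻¹ • (x - d i) := fun x y hxy => by
    dsimp only
    gcongr
  have heq : diffusionOperator l α d w ψ =
      l ^ (-α) • ∑ i, w i • (ψ ∘ fun x => l⁻¹ • (x - d i)) := by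
    ext x
    simp only [diffusionOperator_apply, Pi.smul_apply, Finset.sum_apply, Function.comp_apply,
      smul_eq_mul]
  rw [Submodule.mem_comap, heq]
  exact Submodule.smul_mem _ _ <| Submodule.sum_mem _ fun i _ =>
    Submodule.smul_mem _ _ (comp_mem_piecewiseConstant (hmono i) hψ)

theorem diffusionOperator_sub_mul_apply {ι : Type*} [Fintype ι] (c p : ι → ℝ) (ψ : ℝ → ℝ)
    (x : ℝ) :
    diffusionOperator l α (fun q : ι × ι => c q.1 - c q.2) (fun q => p q.1 * p q.2) ψ x =
      l ^ (-α) * ∑ i, ∑ j, p i * p j * ψ ((x - c i + c j) / l) := by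
  simp only [diffusionOperator_apply, Fintype.sum_prod_type, smul_eq_mul, div_eq_inv_mul,
    sub_sub_eq_add_sub, sub_add_eq_add_sub]

theorem IsStationaryMeasure.exists_piecewiseConstant_diffusionOperator_lt {ι : Type*} [Fintype ι]
    {d w : ι → ℝ} {ν : Measure ℝ} [IsFiniteMeasure ν] [NeZero ν] (hl₀ : 0 < l) (hl₁ : l < 1)
    (hw : ∀ i, 0 ≤ w i) (hν : IsStationaryMeasure l d w ν)
    (hdensity : TendstoUniformly (ballDensity ν α) 0 (𝓝[>] 0)) {R : ℝ} (hR : 0 ≤ R)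
    (hd : ∀ i, ‖d i‖ ≤ (1 - l) * R) :
    ∃ θ > 0, ∃ ψ ∈ piecewiseConstant ℝ, (∀ x ∉ closedBall 0 R, ψ x = 0) ∧
      (∀ x ∈ closedBall 0 R, θ ≤ ψ x ∧ ψ x ≤ θ⁻¹) ∧
      ∀ x ∈ closedBall 0 R, diffusionOperator l α d w ψ x < ψ x := by
  set J : Set ℝ := closedBall 0 R
  set D := diffusionOperator l α d w
  have h0 : (0 : ℝ) ∈ J := mem_closedBall_self hR
  obtain ⟨N, hN⟩ := hν.exists_diffusionOperator_pow_indicator_lt_one hl₀ hl₁ hw hdensity R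
  have hN₀ : N ≠ 0 := by
    rintro rfl
    simpa [hR] using hN 0
  set ψ : ℝ → ℝ := (∑ n ∈ Finset.range N, D ^ n) (J.indicator 1)
  have hψ : ψ ∈ piecewiseConstant ℝ :=
    geom_sum_apply_mem_of_mem_invtSubmodule
      (piecewiseConstant_mem_invtSubmodule_diffusionOperator hl₀.le d w)
      (Submodule.subset_span ⟨J, (convex_closedBall 0 R).ordConnected, rfl⟩) N
  have hsupport : ψ ∈ Submodule.pi Jᶜ fun _ => (⊥ : Submodule ℝ ℝ) :=
    geom_sum_apply_mem_of_mem_invtSubmodule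
      (pi_compl_bot_mem_invtSubmodule_diffusionOperator hl₀.ne' fun i =>
        mapsTo_smul_add_closedBall hl₀.le (hd i))
      (fun x hx => indicator_of_notMem hx 1) N
  have hone {x : ℝ} (hx : x ∈ J) : 1 ≤ ψ x :=
    one_le_geom_sum_apply_indicator (monotone_diffusionOperator hl₀.le hw) hN₀ hx
  obtain ⟨C, hC⟩ := exists_forall_le_of_mem_piecewiseConstant hψ
  have hC₁ : 1 ≤ C := (hone h0).trans (hC 0)
  refine ⟨C⁻¹, inv_pos.mpr (one_pos.trans_le hC₁), ψ, hψ, fun x hx => hsupport x hx,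
    fun x hx => ⟨(inv_le_one_of_one_le₀ hC₁).trans (hone hx), ?_⟩,
    fun x hx => map_geom_sum_apply_indicator_lt hx (hN x)⟩
  rw [inv_inv]
  exact hC x

end RealLine

/-- Theorem (existence of a test function): if the stationary measure `μ` of an iterated
function scheme of similarities has finite energy `I(μ, α)` for some `0 < α < 1`, then
there are an invariant compact interval `K`, an admissible compact interval `J`, a
constant `θ > 0` and a piecewise constant test function `ψ` supported on `J`, bounded
between `θ` and `θ⁻¹` on `J`, which is strictly decreased on `J` by the symmetric
diffusion operator `D^{(2)}_{α,S}`. -/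
theorem finding_D2 (k : ℕ) (l : ℝ) (hl0 : 0 < l) (hl1 : l < 1)
    (c : Fin k → ℝ) (p : Fin k → ℝ) (hp : ∀ j, 0 < p j) (hpsum : ∑ j, p j = 1)
    (μ : Measure ℝ) [IsProbabilityMeasure μ]
    (hμ : μ = ∑ j, ENNReal.ofReal (p j) • Measure.map (fun x : ℝ => l * x + c j) μ)
    (α : ℝ) (hα0 : 0 < α) (hα1 : α < 1)
    (henergy : (∫⁻ x, ∫⁻ y, (ENNReal.ofReal |x - y|) ^ (-α) ∂μ ∂μ) ≠ ⊤) :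
    ∃ (a b : ℝ), a ≤ b ∧ (∀ j, ∀ x ∈ Set.Icc a b, l * x + c j ∈ Set.Icc a b) ∧
    ∃ (u v : ℝ), u ≤ v ∧
      {z : ℝ | ∃ x ∈ Set.Icc a b, ∃ y ∈ Set.Icc a b, z = x - y}
        ⊆ interior (Set.Icc u v) ∧
    ∃ θ : ℝ, 0 < θ ∧
    ∃ ψ : ℝ → ℝ,
      -- `ψ` is piecewise constant: a finite linear combination of indicators of intervals
      (∃ (m : ℕ) (coef : Fin m → ℝ) (I : Fin m → Set ℝ),
          (∀ i, (I i).OrdConnected) ∧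
          ψ = fun x => ∑ i, (I i).indicator (fun _ => coef i) x) ∧
      (∀ x ∉ Set.Icc u v, ψ x = 0) ∧
      (∀ x ∈ Set.Icc u v, θ ≤ ψ x ∧ ψ x ≤ θ⁻¹) ∧
      ∀ x ∈ Set.Icc u v,
        l ^ (-α) * ∑ i, ∑ j, p i * p j * ψ ((x - c i + c j) / l) < ψ x := by
  have hp₀ (j) : 0 ≤ p j := (hp j).le
  obtain ⟨A, hA, hc⟩ := exists_nonneg_forall_norm_le_one_sub_mul hl1 c
  have hK (j) : MapsTo (fun x => l * x + c j) (Icc (-A) A) (Icc (-A) A) := by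
    simpa [Real.closedBall_eq_Icc] using mapsTo_smul_add_closedBall hl0.le (hc j)
  have hd (q : Fin k × Fin k) : ‖c q.1 - c q.2‖ ≤ (1 - l) * (2 * A + 1) := by
    linarith [norm_sub_le (c q.1) (c q.2), hc q.1, hc q.2]
  simp only [← Real.enorm_eq_ofReal_abs] at henergy
  obtain ⟨θ, hθ, ψ, hψ, hsupport, hbounds, hlt⟩ :=
    (isStationaryMeasure_differenceMeasure hp₀ hμ).exists_piecewiseConstant_diffusionOperator_lt
      hl0 hl1 (fun q => mul_nonneg (hp₀ q.1) (hp₀ q.2))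
      (tendstoUniformly_ballDensity_differenceMeasure hα0 henergy) (by positivity) hd
  simp only [Real.closedBall_eq_Icc, zero_sub, zero_add] at hsupport hbounds hlt
  refine ⟨-A, A, by linarith, hK, -(2 * A + 1), 2 * A + 1, by linarith, ?_, θ, hθ, ψ,
    exists_eq_sum_indicator_of_mem_piecewiseConstant hψ, hsupport, hbounds, fun x hx => ?_⟩
  · rintro _ ⟨x, hx, y, hy, rfl⟩
    rw [interior_Icc]
    constructor <;> linarith [hx.1, hx.2, hy.1, hy.2]
  · exact (diffusionOperator_sub_mul_apply c p ψ x).symm.trans_lt (hlt x hx)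
end
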